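/- Let G=(V,E) be a finite simple graph and let k ≥ 2 be an integer with |E| ≥ 2·C(k,2), where C(k,2) is the binomial coefficient. Let k' := 2·C(k,2) + k + 1 and construct the graph G'=(V',E') and partition (A',B') of V' as follows. Start with the vertices V. For each edge e = {x,y} ∈ E add four new vertices u_e, w_e, x_e, y_e and a new vertex v* (added once), with edges {u_e,x}, {u_e,y}, {w_e,x}, {w_e,y}, {w_e,x_e}, {w_e,y_e}, {x_e,v*}. Add a set V_z of |E| − 2·C(k,2) + 1 new vertices, each adjacent to v*. Finally, for each vertex p ∈ {u_e : e ∈ E} ∪ {y_e : e ∈ E}, add a set of 2k'+2 new degree-one vertices adjacent only to p, and for each vertex p ∈ V_z add a set of 2k'+2 new degree-one vertices adjacent only to p. Set B' := {w_e : e ∈ E} ∪ {v*} ∪ V_z ∪ (all degree-one vertices attached to vertices of {u_e : e ∈ E} ∪ {y_e : e ∈ E}), and A' := V'\B'. Then G has a clique of size k if and only if there exists a set S' ⊆ V' with |S'| ≤ k' such that |E'(A' ⊕ S', B' ⊕ S')| > |E'(A',B')|, where E'(X,Y) denotes the set of edges of G' with one endpoint in X and one in Y and ⊕ denotes symmetric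 difference. -/

import Mathlib

open Finset

/-- The vertices of the graph `G'` constructed in the reduction from `Clique`
to `LS Max Cut`: the original vertices, the vertices `u_e, w_e, x_e, y_e` for
every edge `e` (here `Es` is the type of edges of `G`), the vertex `v*`, the
vertices of `V_z` (`zc` many), and the pendant (degree-one) vertices attached
to the `u_e`-, `y_e`- and `z`-vertices (`pc` many each). -/
inductive RedVert (V : Type*) (Es : Type*) (zc pc : ℕ) where
  | orig : V → RedVert V Es zc pc
  | ue : Es → RedVert V Es zc pc
  | we : Es → RedVert V Es zc pc
  | xe : Es → RedVert V Es zc pc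
  | ye : Es → RedVert V Es zc pc
  | star : RedVert V Es zc pc
  | z : Fin zc → RedVert V Es zc pc
  | pu : Es → Fin pc → RedVert V Es zc pc
  | py : Es → Fin pc → RedVert V Es zc pc
  | pz : Fin zc → Fin pc → RedVert V Es zc pc

/-- The edges of the reduction graph `G'` (as a relation, to be symmetrized):
`u_e` and `w_e` are adjacent to both endpoints of `e`; `w_e` is adjacent to
`x_e` and `y_e`; `x_e` is adjacent to `v*`; `v*` is adjacent to all
`z`-vertices; and pendant vertices are attached to the `u_e`-, `y_e`- and
`z`-vertices respectively. Here `mem e v` states that `v` is an endpoint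
of the edge `e`. -/
def redRel {V : Type*} {Es : Type*} {zc pc : ℕ} (mem : Es → V → Prop) :
    RedVert V Es zc pc → RedVert V Es zc pc → Prop
  | .orig v, .ue e => mem e v
  | .orig v, .we e => mem e v
  | .we e, .xe e' => e = e'
  | .we e, .ye e' => e = e'
  | .xe _, .star => True
  | .star, .z _ => True
  | .ue e, .pu e' _ => e = e'
  | .ye e, .py e' _ => e = e'
  | .z i, .pz i' _ => i = i'
  | _, _ => False

/-- The cut of the partition `(X,Y)` in the graph `H`: the set of edges of
`H` with one endpoint in `X` and one endpoint in `Y`. -/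
def cutSet {W : Type*} (H : SimpleGraph W) (X Y : Set W) : Set (Sym2 W) :=
  {e ∈ H.edgeSet | (∃ x ∈ e, x ∈ X) ∧ (∃ y ∈ e, y ∈ Y)}

/-- The reduction vertices as a sum type. -/
def redEquiv (V Es : Type*) (zc pc : ℕ) : RedVert V Es zc pc ≃
    V ⊕ Es ⊕ Es ⊕ Es ⊕ Es ⊕ Unit ⊕ Fin zc ⊕ (Es × Fin pc) ⊕ (Es × Fin pc) ⊕ (Fin zc × Fin pc) where
  toFun
    | .orig v => .inl v
    | .ue e => .inr (.inl e)
    | .we e => .inr (.inr (.inl e))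
    | .xe e => .inr (.inr (.inr (.inl e)))
    | .ye e => .inr (.inr (.inr (.inr (.inl e))))
    | .star => .inr (.inr (.inr (.inr (.inr (.inl ())))))
    | .z i => .inr (.inr (.inr (.inr (.inr (.inr (.inl i))))))
    | .pu e j => .inr (.inr (.inr (.inr (.inr (.inr (.inr (.inl (e, j))))))))
    | .py e j => .inr (.inr (.inr (.inr (.inr (.inr (.inr (.inr (.inl (e, j)))))))))
    | .pz e j => .inr (.inr (.inr (.inr (.inr (.inr (.inr (.inr (.inr (e, j)))))))))
  invFun
    | .inl v => .orig v
    | .inr (.inl e) => .ue e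
    | .inr (.inr (.inl e)) => .we e
    | .inr (.inr (.inr (.inl e))) => .xe e
    | .inr (.inr (.inr (.inr (.inl e)))) => .ye e
    | .inr (.inr (.inr (.inr (.inr (.inl _))))) => .star
    | .inr (.inr (.inr (.inr (.inr (.inr (.inl i)))))) => .z i
    | .inr (.inr (.inr (.inr (.inr (.inr (.inr (.inl p))))))) => .pu p.1 p.2
    | .inr (.inr (.inr (.inr (.inr (.inr (.inr (.inr (.inl p)))))))) => .py p.1 p.2
    | .inr (.inr (.inr (.inr (.inr (.inr (.inr (.inr (.inr p)))))))) => .pz p.1 p.2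
  left_inv a := by cases a <;> rfl
  right_inv a := by
    rcases a with a | a | a | a | a | a | a | a | a | a <;> rfl

noncomputable instance redFintype {V Es : Type*} [Fintype V] [Fintype Es] {zc pc : ℕ} :
    Fintype (RedVert V Es zc pc) := Fintype.ofEquiv _ (redEquiv V Es zc pc).symm

lemma sum_redVert {V Es : Type*} [Fintype V] [Fintype Es] {zc pc : ℕ}
    (f : RedVert V Es zc pc → ℤ) :
    ∑ a, f a = ∑ v, f (.orig v) + ∑ e, f (.ue e) + ∑ e, f (.we e) + ∑ e, f (.xe e)
      + ∑ e, f (.ye e) + f .star + ∑ i, f (.z i) + ∑ e, ∑ j, f (.pu e j)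
      + ∑ e, ∑ j, f (.py e j) + ∑ i, ∑ j, f (.pz i j) := by
  rw [← (redEquiv V Es zc pc).symm.sum_comp f]
  simp only [Fintype.sum_sum_type, Fintype.sum_prod_type, redEquiv, Equiv.coe_fn_symm_mk,
    Finset.univ_unique, Finset.sum_singleton]
  ring

open Classical in
lemma ncard_cut {W : Type*} [Fintype W] (R : W → W → Prop)
    (hR : ∀ a b, R a b → ¬ R b a) (X : Set W) :
    ((cutSet (SimpleGraph.fromRel R) Xᶜ X).ncard : ℤ) =
      ∑ a, ∑ b, if R a b ∧ ¬ (a ∈ X ↔ b ∈ X) then (1 : ℤ) else 0 := by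
  have h1 : cutSet (SimpleGraph.fromRel R) Xᶜ X =
      (fun p : W × W => s(p.1, p.2)) ''
        (({p : W × W | R p.1 p.2 ∧ ¬ (p.1 ∈ X ↔ p.2 ∈ X)} : Finset (W × W)) : Set (W × W)) := by
    ext e
    induction e with | _ x y
    simp only [cutSet, Set.mem_ofPred_eq, SimpleGraph.mem_edgeSet, SimpleGraph.fromRel_adj,
      Sym2.mem_iff, Set.mem_image, Finset.coe_filter, Finset.mem_univ, true_and, Prod.exists,
      Sym2.eq_iff, Set.mem_compl_iff]
    constructor
    · rintro ⟨⟨hne, h | h⟩, ⟨a, rfl | rfl, ha⟩, ⟨b, rfl | rfl, hb⟩⟩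
      all_goals first
        | exact absurd hb ha
        | exact ⟨_, _, ⟨h, by tauto⟩, Or.inl ⟨rfl, rfl⟩⟩
        | exact ⟨_, _, ⟨h, by tauto⟩, Or.inr ⟨rfl, rfl⟩⟩
    · rintro ⟨a, b, ⟨hr, hx⟩, ⟨rfl, rfl⟩ | ⟨rfl, rfl⟩⟩
      · refine ⟨⟨?_, Or.inl hr⟩, ?_⟩
        · rintro rfl; exact hx Iff.rfl
        · by_cases ha : a ∈ X
          · exact ⟨⟨b, Or.inr rfl, by tauto⟩, ⟨a, Or.inl rfl, ha⟩⟩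
          · exact ⟨⟨a, Or.inl rfl, ha⟩, ⟨b, Or.inr rfl, by tauto⟩⟩
      · refine ⟨⟨?_, Or.inr hr⟩, ?_⟩
        · rintro rfl; exact hx Iff.rfl
        · by_cases ha : a ∈ X
          · exact ⟨⟨b, Or.inl rfl, by tauto⟩, ⟨a, Or.inr rfl, ha⟩⟩
          · exact ⟨⟨a, Or.inr rfl, ha⟩, ⟨b, Or.inl rfl, by tauto⟩⟩
  rw [h1, Set.InjOn.ncard_image, Set.ncard_coe_finset, Finset.card_filter,
    Fintype.sum_prod_type]
  · push_cast; rfl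
  · rintro ⟨a, b⟩ hab ⟨c, d⟩ hcd h
    simp only [Finset.coe_filter, Finset.mem_univ, true_and, Set.mem_ofPred_eq] at hab hcd
    simp only [Sym2.eq_iff] at h
    rcases h with ⟨rfl, rfl⟩ | ⟨rfl, rfl⟩
    · rfl
    · exact absurd hab.1 (hR _ _ hcd.1)

open Classical in
lemma ncard_sum {W : Type*} [Fintype W] (S : Set W) :
    (S.ncard : ℤ) = ∑ a, if a ∈ S then (1 : ℤ) else 0 := by
  rw [Set.ncard_eq_toFinset_card', Finset.sum_boole]
  congr 2
  ext; simp

open Classical in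
/-- Indicator that `S` separates `a` and `b`. -/
noncomputable def sepI {W : Type*} (S : Set W) (a b : W) : ℤ := if (a ∈ S ↔ b ∈ S) then 0 else 1

/-- The side `B'`. -/
def redB (V Es : Type*) (zc pc : ℕ) : Set (RedVert V Es zc pc) :=
  {a | match a with
           | .we _ => True | .star => True | .z _ => True
           | .pu _ _ => True | .py _ _ => True | .orig _ => False
           | .ue _ => False | .xe _ => False | .ye _ => False | .pz _ _ => False}

open Classical in
lemma cut_formula {V Es : Type*} [Fintype V] [Fintype Es] {zc pc : ℕ} (mem : Es → V → Prop)
    (S : Set (RedVert V Es zc pc)) :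
    ((cutSet (SimpleGraph.fromRel (redRel mem)) (symmDiff (redB V Es zc pc)ᶜ S)
      (symmDiff (redB V Es zc pc) S)).ncard : ℤ) =
    ∑ e, ((∑ v, if mem e v then sepI S (.orig v) (.ue e) + (1 - sepI S (.orig v) (.we e)) else 0)
      + (1 - sepI S (.we e) (.xe e)) + (1 - sepI S (.we e) (.ye e)) + (1 - sepI S (.xe e) .star)
      + (∑ j, (1 - sepI S (.ue e) (.pu e j))) + (∑ j, (1 - sepI S (.ye e) (.py e j))))
    + ∑ i, (sepI S .star (.z i) + ∑ j, (1 - sepI S (.z i) (.pz i j))) := by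
  have h : symmDiff (redB V Es zc pc)ᶜ S = (symmDiff (redB V Es zc pc) S)ᶜ := by
    ext a; simp only [Set.mem_symmDiff, Set.mem_compl_iff]; tauto
  rw [h, ncard_cut]
  · have hs : ∀ a, a ∈ symmDiff (redB V Es zc pc) S ↔ ¬ (a ∈ redB V Es zc pc ↔ a ∈ S) := by
      intro a; simp only [Set.mem_symmDiff]; tauto
    have p1 : ∀ p q : Prop, (if (p ↔ ¬ q) then (1:ℤ) else 0) = (if (p ↔ q) then 0 else 1) := by
      intro p q; split_ifs <;> first | rfl | (exfalso; tauto)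
    have p2 : ∀ p q : Prop, (if (p ↔ q) then (1:ℤ) else 0) = 1 - (if (p ↔ q) then 0 else 1) := by
      intro p q; split_ifs <;> rfl
    have hd : ∀ (a b : RedVert V Es zc pc) (r : Prop), (if r ∧ ¬ (a ∈ symmDiff (redB V Es zc pc) S ↔
        b ∈ symmDiff (redB V Es zc pc) S) then (1:ℤ) else 0) =
        if r then (if (a ∈ redB V Es zc pc ↔ b ∈ redB V Es zc pc) then sepI S a b
          else 1 - sepI S a b) else 0 := by
      intro a b r
      rw [hs, hs, sepI]
      by_cases r <;> by_cases a ∈ redB V Es zc pc <;> by_cases b ∈ redB V Es zc pc <;>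
        by_cases a ∈ S <;> by_cases b ∈ S <;> simp [*]
    simp only [hd]
    simp only [sum_redVert, redRel, redB, Set.mem_ofPred_eq, if_false, if_true,
      Finset.sum_const_zero, add_zero, zero_add, iff_true, iff_false, 
      not_true_eq_false, not_false_eq_true, Finset.sum_add_distrib]
    have q1 : ∀ f : V → Es → ℤ, ∑ v, ∑ e, (if mem e v then f v e else 0) =
        ∑ e, ∑ v, (if mem e v then f v e else 0) := fun f => Finset.sum_comm
    have q2 : ∀ f : Es → Es → ℤ, ∑ e, ∑ e', (if e = e' then f e e' else 0) =
        ∑ e, f e e := fun f => by simp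
    have q3 : ∀ f : Es → Es → Fin pc → ℤ, ∑ e, ∑ e', ∑ j, (if e = e' then f e e' j else 0) =
        ∑ e, ∑ j, f e e j := fun f => by
      refine Finset.sum_congr rfl fun e _ => ?_
      rw [Finset.sum_eq_single e] <;> simp +contextual [eq_comm]
    have q4 : ∀ f : Fin zc → Fin zc → Fin pc → ℤ,
        ∑ e, ∑ e', ∑ j, (if e = e' then f e e' j else 0) =
        ∑ e, ∑ j, f e e j := fun f => by
      refine Finset.sum_congr rfl fun e _ => ?_
      rw [Finset.sum_eq_single e] <;> simp +contextual [eq_comm]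
    have q5 : ∀ (e : Es) (f g : V → ℤ), ∑ v, (if mem e v then f v + g v else 0) =
        ∑ v, (if mem e v then f v else 0) + ∑ v, (if mem e v then g v else 0) := by
      intro e f g
      rw [← Finset.sum_add_distrib]
      refine Finset.sum_congr rfl fun v _ => ?_
      split_ifs <;> simp
    simp only [q1, q2, q3, q4, q5, Finset.sum_add_distrib]
    ring
  · intro a b
    cases a <;> cases b <;> simp [redRel]

open Classical in
/-- Gain of the gadget of the edge `e`. -/
noncomputable def gainE {V Es : Type*} [Fintype V] {zc pc : ℕ} (mem : Es → V → Prop)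
    (S : Set (RedVert V Es zc pc)) (e : Es) : ℤ :=
  (∑ v, if mem e v then sepI S (.orig v) (.ue e) - sepI S (.orig v) (.we e) else 0)
      - sepI S (.we e) (.xe e) - sepI S (.we e) (.ye e) - sepI S (.xe e) .star
      - (∑ j, sepI S (.ue e) (.pu e j)) - (∑ j, sepI S (.ye e) (.py e j))

/-- Gain of a `z`-vertex. -/
noncomputable def gainZ {V Es : Type*} {zc pc : ℕ}
    (S : Set (RedVert V Es zc pc)) (i : Fin zc) : ℤ :=
  sepI S .star (.z i) - ∑ j, sepI S (.z i) (.pz i j)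

lemma gain_formula {V Es : Type*} [Fintype V] [Fintype Es] {zc pc : ℕ} (mem : Es → V → Prop)
    (S : Set (RedVert V Es zc pc)) :
    ((cutSet (SimpleGraph.fromRel (redRel mem)) (symmDiff (redB V Es zc pc)ᶜ S)
      (symmDiff (redB V Es zc pc) S)).ncard : ℤ) -
    ((cutSet (SimpleGraph.fromRel (redRel mem)) (redB V Es zc pc)ᶜ
      (redB V Es zc pc)).ncard : ℤ) = ∑ e, gainE mem S e + ∑ i, gainZ S i := by
  classical
  have h0 := cut_formula (zc := zc) (pc := pc) mem ∅
  rw [← Set.bot_eq_empty, symmDiff_bot, symmDiff_bot] at h0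
  rw [h0, cut_formula, add_sub_add_comm, ← Finset.sum_sub_distrib, ← Finset.sum_sub_distrib]
  have he : ∀ a b : RedVert V Es zc pc, sepI ⊥ a b = 0 := by intro a b; simp [sepI]
  simp only [he]
  congr 1
  · refine Finset.sum_congr rfl fun e _ => ?_
    have : (∑ v, if mem e v then sepI S (.orig v) (.ue e) - sepI S (.orig v) (.we e) else 0) =
      (∑ v, if mem e v then sepI S (.orig v) (.ue e) + (1 - sepI S (.orig v) (.we e)) else 0)
      - ∑ v, if mem e v then (0:ℤ) + (1 - 0) else 0 := by
      rw [← Finset.sum_sub_distrib]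
      refine Finset.sum_congr rfl fun v _ => ?_
      split_ifs <;> ring
    rw [gainE, this]
    simp only [Finset.sum_sub_distrib]
    simp only [Finset.sum_const_zero]
    ring
  · refine Finset.sum_congr rfl fun e _ => ?_
    rw [gainZ]
    simp only [Finset.sum_sub_distrib]
    simp only [Finset.sum_const_zero]
    ring

lemma sepI_nonneg {W : Type*} (S : Set W) (a b : W) : 0 ≤ sepI S a b := by
  unfold sepI; split_ifs <;> simp

lemma pend_nonneg {W : Type*} (S : Set W) (p : W) {pc : ℕ} (q : Fin pc → W) :
    0 ≤ ∑ j, sepI S p (q j) := Finset.sum_nonneg fun _ _ => sepI_nonneg _ _ _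

lemma pend_ge {W : Type*} [Fintype W] (S : Set W) (p : W) (hp : p ∈ S) {pc : ℕ} (q : Fin pc → W)
    (hq : Function.Injective q) (hc : S.ncard + 2 ≤ pc) : 2 ≤ ∑ j, sepI S p (q j) := by
  classical
  have h1 : (∑ j, if q j ∈ S then (1 : ℤ) else 0) ≤ S.ncard := by
    rw [Finset.sum_boole]
    norm_cast
    rw [← Finset.card_image_of_injective _ hq, ← Set.ncard_coe_finset]
    apply Set.ncard_le_ncard _ (Set.toFinite _)
    intro a; simp; rintro x hx rfl; exact hx
  have h2 : ∑ j, sepI S p (q j) = ∑ j : Fin pc, ((1:ℤ) - if q j ∈ S then (1 : ℤ) else 0) := by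
    refine Finset.sum_congr rfl fun j _ => ?_
    by_cases h : q j ∈ S <;> simp [sepI, h, hp]
  rw [h2, Finset.sum_sub_distrib]
  simp
  simp at h1
  omega

open Classical in
lemma sum_mem_two {V : Type*} [Fintype V] (P : V → Prop) (x y : V) (hxy : x ≠ y)
    (hP : ∀ v, P v ↔ v = x ∨ v = y) (f : V → ℤ) : (∑ v, if P v then f v else 0) = f x + f y := by
  rw [← Finset.sum_filter]
  have : Finset.univ.filter P = {x, y} := by ext v; simp [hP]
  rw [this, Finset.sum_pair hxy]

/-- An edge whose gadget is profitably flipped. -/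
def goodE {V Es : Type*} {zc pc : ℕ} (mem : Es → V → Prop)
    (S : Set (RedVert V Es zc pc)) (e : Es) : Prop :=
  .we e ∈ S ∧ .xe e ∈ S ∧ ∀ v, mem e v → .orig v ∈ S

open Classical in
lemma gainE_le {V Es : Type*} [Fintype V] [Fintype Es] {zc pc : ℕ} (mem : Es → V → Prop)
    (hm : ∀ e, ∃ x y, x ≠ y ∧ ∀ v, mem e v ↔ v = x ∨ v = y)
    (S : Set (RedVert V Es zc pc)) (hc : S.ncard + 2 ≤ pc) (e : Es) :
    gainE mem S e ≤ if .star ∈ S then (if goodE mem S e then 1 else -1) else 0 := by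
  obtain ⟨x, y, hxy, hv⟩ := hm e
  have hg : goodE mem S e ↔ .we e ∈ S ∧ .xe e ∈ S ∧ .orig x ∈ S ∧ .orig y ∈ S := by
    simp [goodE, hv]
  rw [gainE, sum_mem_two (mem e) x y hxy hv]
  have u0 := pend_nonneg S (.ue e) (RedVert.pu e)
  have y0 := pend_nonneg S (.ye e) (RedVert.py e)
  have u1 : .ue e ∈ S → _ := fun h => pend_ge S (.ue e) h (RedVert.pu e)
    (fun a b h => by injection h) hc
  have y1 : .ye e ∈ S → _ := fun h => pend_ge S (.ye e) h (RedVert.py e)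
    (fun a b h => by injection h) hc
  generalize ∑ j, sepI S (.ue e) (RedVert.pu e j) = U at *
  generalize ∑ j, sepI S (.ye e) (RedVert.py e j) = Y at *
  have hU : sepI S (.orig x) (.ue e) + sepI S (.orig y) (.ue e) - U ≤
      (if .orig x ∈ S then 1 else 0) + (if .orig y ∈ S then 1 else 0) := by
    unfold sepI
    by_cases hu : .ue e ∈ S
    · have := u1 hu
      split_ifs <;> linarith
    · simp only [hu, iff_false]
      split_ifs <;> first | linarith | contradiction
  have hY : - sepI S (.we e) (.ye e) - Y ≤ - (if .we e ∈ S then 1 else 0) := by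
    unfold sepI
    by_cases hu : .ye e ∈ S
    · have := y1 hu
      split_ifs <;> linarith
    · simp only [hu, iff_false]
      split_ifs <;> first | linarith | contradiction
  have key : - sepI S (.orig x) (.we e) - sepI S (.orig y) (.we e)
      - sepI S (.we e) (.xe e) - sepI S (.xe e) .star
      + (if .orig x ∈ S then 1 else 0) + (if .orig y ∈ S then 1 else 0)
      - (if .we e ∈ S then 1 else 0) ≤ if .star ∈ S then (if goodE mem S e then 1 else -1) else 0 := by
    unfold sepI
    by_cases .orig x ∈ S <;> by_cases .orig y ∈ S <;> by_cases .we e ∈ S <;>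
      by_cases .xe e ∈ S <;> by_cases .star ∈ S <;> simp [*]
  linarith

open Classical in
lemma gainZ_le {V Es : Type*} [Fintype V] [Fintype Es] {zc pc : ℕ}
    (S : Set (RedVert V Es zc pc)) (hc : S.ncard + 2 ≤ pc) (i : Fin zc) :
    gainZ S i ≤ if .star ∈ S then 1 else 0 := by
  have z0 := pend_nonneg S (.z i) (RedVert.pz i)
  have z1 : .z i ∈ S → _ := fun h => pend_ge S (.z i) h (RedVert.pz i)
    (fun a b h => by injection h) hc
  rw [gainZ]
  generalize ∑ j, sepI S (.z i) (RedVert.pz i j) = U at *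
  unfold sepI
  by_cases hz : .z i ∈ S
  · have := z1 hz
    split_ifs <;> linarith
  · simp only [hz, iff_false]
    split_ifs <;> first | linarith | contradiction

open Classical in
/-- From an improving flip: many good edges. -/
lemma backward_count {V Es : Type*} [Fintype V] [Fintype Es] {zc pc C : ℕ} (mem : Es → V → Prop)
    (hm : ∀ e, ∃ x y, x ≠ y ∧ ∀ v, mem e v ↔ v = x ∨ v = y)
    (hz : zc + 2 * C = Fintype.card Es + 1)
    (S : Set (RedVert V Es zc pc)) (hc : S.ncard + 2 ≤ pc)
    (hpos : 0 < ∑ e, gainE mem S e + ∑ i, gainZ S i) :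
    C ≤ (Finset.univ.filter (goodE mem S)).card ∧
    (Finset.univ.filter fun v => RedVert.orig v ∈ S).card
      + 2 * (Finset.univ.filter (goodE mem S)).card + 1 ≤ S.ncard := by
  have h1 := Finset.sum_le_sum fun e (_ : e ∈ Finset.univ) => gainE_le mem hm S hc e
  have h2 := Finset.sum_le_sum fun i (_ : i ∈ Finset.univ) => gainZ_le S hc i
  by_cases hs : .star ∈ S
  · simp only [hs, if_true] at h1 h2
    have h3 : ∑ e, (if goodE mem S e then (1:ℤ) else -1) =
        2 * (Finset.univ.filter (goodE mem S)).card - Fintype.card Es := by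
      have : ∀ e, (if goodE mem S e then (1:ℤ) else -1) =
        2 * (if goodE mem S e then (1:ℤ) else 0) - 1 := by intro e; split_ifs <;> norm_num
      simp only [this, Finset.sum_sub_distrib, ← Finset.mul_sum, Finset.sum_boole]
      simp
    have h4 : ∑ i : Fin zc, (1:ℤ) = zc := by simp
    refine ⟨by omega, ?_⟩
    have h5 := ncard_sum S
    rw [sum_redVert] at h5
    have a1 : ∑ e, (if goodE mem S e then (1:ℤ) else 0) ≤
        ∑ e, if RedVert.we e ∈ S then (1:ℤ) else 0 := by
      refine Finset.sum_le_sum fun e _ => ?_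
      by_cases h : goodE mem S e
      · simp [h, h.1]
      · simp only [h, if_false]; split_ifs <;> simp
    have a2 : ∑ e, (if goodE mem S e then (1:ℤ) else 0) ≤
        ∑ e, if RedVert.xe e ∈ S then (1:ℤ) else 0 := by
      refine Finset.sum_le_sum fun e _ => ?_
      by_cases h : goodE mem S e
      · simp [h, h.2.1]
      · simp only [h, if_false]; split_ifs <;> simp
    have nn : ∀ P : Prop, (0:ℤ) ≤ if P then 1 else 0 := by intro P; split_ifs <;> simp
    have b1 := Finset.sum_nonneg fun e (_ : e ∈ Finset.univ) => nn (RedVert.ue e ∈ S)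
    have b2 := Finset.sum_nonneg fun e (_ : e ∈ Finset.univ) => nn (RedVert.ye e ∈ S)
    have b3 := Finset.sum_nonneg fun e (_ : e ∈ Finset.univ) => nn (RedVert.z e ∈ S)
    have b4 := Finset.sum_nonneg fun e (_ : e ∈ Finset.univ) =>
      Finset.sum_nonneg fun j (_ : j ∈ Finset.univ) => nn (RedVert.pu e j ∈ S)
    have b5 := Finset.sum_nonneg fun e (_ : e ∈ Finset.univ) =>
      Finset.sum_nonneg fun j (_ : j ∈ Finset.univ) => nn (RedVert.py e j ∈ S)
    have b6 := Finset.sum_nonneg fun e (_ : e ∈ Finset.univ) =>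
      Finset.sum_nonneg fun j (_ : j ∈ Finset.univ) => nn (RedVert.pz e j ∈ S)
    have c1 : ∑ v, (if RedVert.orig v ∈ S then (1:ℤ) else 0) =
      (Finset.univ.filter fun v => RedVert.orig v ∈ S).card := Finset.sum_boole _ _
    have c2 : ∑ e, (if goodE mem S e then (1:ℤ) else 0) =
      (Finset.univ.filter (goodE mem S)).card := Finset.sum_boole _ _
    rw [c1, if_pos hs] at h5
    rw [c2] at a1 a2
    zify
    linarith
  · simp only [hs, if_false, Finset.sum_const_zero] at h1 h2
    exfalso; linarith

/-- The flip set of a clique. -/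
def cliqueFlip {V Es : Type*} (zc pc : ℕ) (mem : Es → V → Prop) (K : Finset V) :
    Set (RedVert V Es zc pc) :=
  {a | match a with
    | .orig v => v ∈ K
    | .we e => ∀ v, mem e v → v ∈ K
    | .xe e => ∀ v, mem e v → v ∈ K
    | .star => True
    | _ => False}

open Classical in
lemma forward_count {V Es : Type*} [Fintype V] [Fintype Es] {zc pc C : ℕ} (mem : Es → V → Prop)
    (hm : ∀ e, ∃ x y, x ≠ y ∧ ∀ v, mem e v ↔ v = x ∨ v = y)
    (hz : zc + 2 * C = Fintype.card Es + 1) (K : Finset V)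
    (hK : (Finset.univ.filter fun e => ∀ v, mem e v → v ∈ K).card = C) :
    (cliqueFlip zc pc mem K).ncard = 2 * C + K.card + 1 ∧
    0 < ∑ e, gainE mem (cliqueFlip zc pc mem K) e + ∑ i, gainZ (cliqueFlip zc pc mem K) i := by
  have c2 : ∑ e, (if ∀ v, mem e v → v ∈ K then (1:ℤ) else 0) = C := by
    rw [Finset.sum_boole, hK]
  constructor
  · zify
    rw [ncard_sum, sum_redVert]
    have s1 : ∑ v, (if RedVert.orig v ∈ cliqueFlip zc pc mem K then (1:ℤ) else 0) = K.card := by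
      rw [Finset.sum_boole]
      congr 2
      ext v
      rw [Finset.mem_filter]
      exact and_iff_right (Finset.mem_univ v)
    have s2 : ∑ e, (if RedVert.we e ∈ cliqueFlip zc pc mem K then (1:ℤ) else 0) = C := by
      rw [← c2]
      exact Finset.sum_congr rfl fun e _ => if_congr Iff.rfl rfl rfl
    have s3 : ∑ e, (if RedVert.xe e ∈ cliqueFlip zc pc mem K then (1:ℤ) else 0) = C := by
      rw [← c2]
      exact Finset.sum_congr rfl fun e _ => if_congr Iff.rfl rfl rfl
    rw [s1, s2, s3]
    simp [cliqueFlip]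
    ring
  · have h1 : ∀ e, gainE mem (cliqueFlip zc pc mem K) e =
        2 * (if ∀ v, mem e v → v ∈ K then (1:ℤ) else 0) - 1 := by
      intro e
      obtain ⟨x, y, hxy, hv⟩ := hm e
      rw [gainE, sum_mem_two (mem e) x y hxy hv]
      simp only [sepI, cliqueFlip, Set.mem_ofPred_eq, hv]
      by_cases hx : x ∈ K <;> by_cases hy : y ∈ K <;> simp [hx, hy]
    have h2 : ∀ i, gainZ (cliqueFlip zc pc mem K) i = 1 := by
      intro i
      simp [gainZ, sepI, cliqueFlip]
    simp only [h1, h2, Finset.sum_sub_distrib, ← Finset.mul_sum, c2]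
    simp
    omega

/-- W[1]-hardness reduction from `Clique` to `LS Max Cut` with unit weights:
for `k ≥ 2` and `|E| ≥ 2·binom(k,2)`, the graph `G` has a clique of size `k`
iff for the constructed graph `G'` with partition `(A',B')` there is a set
`S'` of at most `k' = 2·binom(k,2) + k + 1` vertices whose flip yields a
partition with strictly more cut edges. -/
theorem clique_iff_improving_flip
    {V : Type*} [Fintype V] [DecidableEq V]
    (G : SimpleGraph V) [DecidableRel G.Adj]
    (k : ℕ) (hk : 2 ≤ k) (hE : 2 * Nat.choose k 2 ≤ G.edgeFinset.card) :
    let k' := 2 * Nat.choose k 2 + k + 1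
    let zc := G.edgeFinset.card - 2 * Nat.choose k 2 + 1
    let pc := 2 * k' + 2
    let G' : SimpleGraph (RedVert V (↥G.edgeSet) zc pc) :=
      SimpleGraph.fromRel (redRel fun e v => v ∈ (e : Sym2 V))
    let B' : Set (RedVert V (↥G.edgeSet) zc pc) :=
      {a | match a with
           | .we _ => True | .star => True | .z _ => True
           | .pu _ _ => True | .py _ _ => True | _ => False}
    let A' : Set (RedVert V (↥G.edgeSet) zc pc) := B'ᶜ
    ((∃ S : Finset V, G.IsNClique k S) ↔
      ∃ S' : Set (RedVert V (↥G.edgeSet) zc pc), S'.ncard ≤ k' ∧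
        (cutSet G' A' B').ncard <
          (cutSet G' (symmDiff A' S') (symmDiff B' S')).ncard) := by
  intro k' zc pc G' B' A'
  classical
  have hcard : Fintype.card ↥G.edgeSet = G.edgeFinset.card := by
    rw [SimpleGraph.edgeFinset, Set.toFinset_card]
  have hz : zc + 2 * Nat.choose k 2 = Fintype.card ↥G.edgeSet + 1 := by
    rw [hcard]; simp only [zc]; omega
  have hm : ∀ e : ↥G.edgeSet, ∃ x y, x ≠ y ∧ ∀ v, v ∈ (e : Sym2 V) ↔ v = x ∨ v = y := by
    rintro ⟨e, he⟩
    induction e with | _ x y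
    exact ⟨x, y, G.ne_of_adj he, fun v => Sym2.mem_iff⟩
  have hgain := gain_formula (zc := zc) (pc := pc)
    (fun (e : ↥G.edgeSet) v => v ∈ (e : Sym2 V))
  have hB : B' = redB V (↥G.edgeSet) zc pc := by
    ext a
    cases a <;> rfl
  change (_ ↔ ∃ S' : Set (RedVert V (↥G.edgeSet) zc pc), S'.ncard ≤ k' ∧
    (cutSet (SimpleGraph.fromRel (redRel fun (e : ↥G.edgeSet) v => v ∈ (e : Sym2 V)))
      B'ᶜ B').ncard <
    (cutSet (SimpleGraph.fromRel (redRel fun (e : ↥G.edgeSet) v => v ∈ (e : Sym2 V)))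
      (symmDiff B'ᶜ S') (symmDiff B' S')).ncard)
  rw [hB]
  have hpc : pc = 2 * k' + 2 := rfl
  have hk' : k' = 2 * Nat.choose k 2 + k + 1 := rfl
  clear hB
  clear_value A' B' G'
  clear A' B' G'
  clear_value zc pc k'
  -- edges inside a vertex set
  have hsub : ∀ K : Finset V,
      ((Finset.univ.filter fun e : ↥G.edgeSet => ∀ v, v ∈ (e : Sym2 V) → v ∈ K).image
        Subtype.val) ⊆ K.offDiag.image (fun p => s(p.1, p.2)) := by
    intro K e he
    simp only [Finset.mem_image, Finset.mem_filter, Finset.mem_univ, true_and] at he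
    obtain ⟨⟨e, he'⟩, h, rfl⟩ := he
    induction e with | _ x y
    simp only [Finset.mem_image, Finset.mem_offDiag]
    exact ⟨(x, y), ⟨h x (by simp), h y (by simp), G.ne_of_adj he'⟩, rfl⟩
  have hoff : ∀ K : Finset V, (K.offDiag.image (fun p => s(p.1, p.2))).card = K.card.choose 2 :=
    fun K => Sym2.card_image_offDiag K
  constructor
  · rintro ⟨K, hK⟩
    have hKC : (Finset.univ.filter fun e : ↥G.edgeSet => ∀ v, v ∈ (e : Sym2 V) → v ∈ K).card
        = Nat.choose k 2 := by
      rw [← hK.card_eq, ← hoff, ← Finset.card_image_of_injective _ Subtype.val_injective]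
      congr 1
      apply Finset.Subset.antisymm (hsub K)
      intro e he
      simp only [Finset.mem_image, Finset.mem_offDiag] at he
      obtain ⟨⟨x, y⟩, ⟨hx, hy, hxy⟩, rfl⟩ := he
      have hadj : G.Adj x y := hK.isClique hx hy hxy
      simp only [Finset.mem_image, Finset.mem_filter, Finset.mem_univ, true_and]
      refine ⟨⟨s(x, y), hadj⟩, ?_, rfl⟩
      intro v hv
      rcases Sym2.mem_iff.1 hv with rfl | rfl <;> assumption
    obtain ⟨h1, h2⟩ := forward_count (pc := pc) (fun (e : ↥G.edgeSet) v => v ∈ (e : Sym2 V))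
      hm hz K (by convert hKC)
    refine ⟨_, (h1.trans ?_).le, ?_⟩
    · rw [hK.card_eq, hk']
    · rw [← hgain] at h2
      omega
  · rintro ⟨S, hS, hlt⟩
    have hpos := hgain S
    obtain ⟨h1, h2⟩ := backward_count (C := Nat.choose k 2)
      (fun (e : ↥G.edgeSet) v => v ∈ (e : Sym2 V)) hm hz S
      (by omega) (by rw [← hpos]; omega)
    set K := Finset.univ.filter fun v => RedVert.orig v ∈ S with hKdef
    have h3 : (Finset.univ.filter (goodE (fun (e : ↥G.edgeSet) v => v ∈ (e : Sym2 V)) S)).card ≤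
        ((Finset.univ.filter fun e : ↥G.edgeSet => ∀ v, v ∈ (e : Sym2 V) → v ∈ K).image
          Subtype.val).card := by
      rw [Finset.card_image_of_injective _ Subtype.val_injective]
      apply Finset.card_le_card
      intro e he
      simp only [Finset.mem_filter, Finset.mem_univ, true_and, hKdef] at he ⊢
      exact he.2.2
    have h4 : K.card ≤ k := by omega
    have h5 : K.card.choose 2 ≤ k.choose 2 := Nat.choose_le_choose 2 h4
    have heq := Finset.eq_of_subset_of_card_le (hsub K) (by rw [hoff]; omega)
    have h6 : k.choose 2 ≤ K.card.choose 2 := by rw [← hoff, ← heq]; omega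
    have h7 : K.card = k := by
      by_contra hne
      have h8 : K.card ≤ k - 1 := by omega
      have h9 : K.card.choose 2 ≤ (k - 1).choose 2 := Nat.choose_le_choose 2 h8
      obtain ⟨m, rfl⟩ : ∃ m, k = m + 1 := ⟨k - 1, by omega⟩
      have := Nat.choose_succ_succ m 1
      simp at this h9 h6
      omega
    refine ⟨K, ⟨?_, h7⟩⟩
    intro x hx y hy hxy
    have : s(x, y) ∈ K.offDiag.image (fun p => s(p.1, p.2)) :=
      Finset.mem_image.2 ⟨(x, y), Finset.mem_offDiag.2 ⟨hx, hy, hxy⟩, rfl⟩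
    rw [← heq] at this
    obtain ⟨e, -, he⟩ := Finset.mem_image.1 this
    have := e.2
    rw [he] at this
    exact this
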